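/- arXiv:2206.13912 — 2 statements merged into one kernel-verified Lean document; each statement's English description precedes it below -/
import Mathlib

section
/- Let A₁ and A₂ be finite-dimensional simple evolution algebras over a field K. Then the tensor product algebra A₁ ⊗_K A₂ (with multiplication (a⊗b)(a'⊗b') = aa' ⊗ bb') is semisimple: it is the direct sum of finitely many two-sided ideals, each of which is a simple algebra (indeed, the number of summands equals gcd(d₁, d₂), where d_i is the gcd of the lengths of closed paths in the directed graph of A_i). -/
open scoped TensorProduct

/-!
In a natural basis `b`, an ideal containing `x` contains `b k * b k` for every `k` in the support
of `x`. Hence simplicity of an evolution algebra means that its graph is strongly connected and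
that the squares of the basis vectors span. Spanning by squares passes to tensor products, while the
graph of `A₁ ⊗ A₂` is the direct product of the graphs of the factors.

A strongly connected graph of period `d` carries a phase `φ` with values in `ZMod d` that increases
by one along each edge, and every sufficiently long walk length compatible with the phases is
realised. By the Chinese remainder theorem, two vertices of the product graph are then connected by
a path exactly when the difference `φ₁ - φ₂`, taken modulo `gcd d₁ d₂`, has the same value at both.
So the product graph is a disjoint union of `gcd d₁ d₂` strongly connected graphs, and each of them
spans a simple ideal.
-/

namespace EvolutionAlgebra

open Filter Relation Submodule

section Walks

variable {ι : Type*} {E : ι → ι → Prop} {m n : ℕ} {u v w : ι}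

/-- Existence of a walk with `n` edges from one vertex to another in the directed graph `E`. -/
def HasWalk (E : ι → ι → Prop) : ℕ → ι → ι → Prop
  | 0 => Eq
  | n + 1 => Relation.Comp E (HasWalk E n)

theorem hasWalk_one (h : E u v) : HasWalk E 1 u v := ⟨v, h, rfl⟩

theorem HasWalk.append (huv : HasWalk E m u v) (hvw : HasWalk E n v w) :
    HasWalk E (m + n) u w := by
  induction m generalizing u with
  | zero => cases huv; rwa [Nat.zero_add]
  | succ m ih =>
    obtain ⟨x, hux, hxv⟩ := huv
    rw [Nat.succ_add]
    exact ⟨x, hux, ih hxv⟩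

theorem reflTransGen_iff_exists_hasWalk : ReflTransGen E u v ↔ ∃ n, HasWalk E n u v := by
  constructor
  · intro h
    induction h with
    | refl => exact ⟨0, rfl⟩
    | tail _ hvw ih => exact ih.imp' (· + 1) fun n hn ↦ hn.append (hasWalk_one hvw)
  · rintro ⟨n, h⟩
    induction n generalizing u with
    | zero => exact h ▸ .refl
    | succ n ih =>
      obtain ⟨w, huw, hwv⟩ := h
      exact (ih hwv).head huw

theorem hasWalk_iff_exists_isChain :
    HasWalk E n u v ↔ ∃ l : List ι, l.length = n ∧ List.IsChain E (u :: l) ∧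
      (u :: l).getLast (List.cons_ne_nil u l) = v := by
  constructor
  · intro h
    induction n generalizing u with
    | zero => exact ⟨[], rfl, List.isChain_singleton u, h⟩
    | succ n ih =>
      obtain ⟨w, huw, hwv⟩ := h
      obtain ⟨l, rfl, hl, rfl⟩ := ih hwv
      exact ⟨w :: l, rfl, hl.cons_cons huw, List.getLast_cons _⟩
  · rintro ⟨l, rfl, hl, rfl⟩
    induction l generalizing u with
    | nil => rfl
    | cons w l ih =>
      rw [List.isChain_cons_cons] at hl
      rw [List.getLast_cons (List.cons_ne_nil w l)]
      exact ⟨w, hl.1, ih hl.2⟩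

/-- The gcd of the lengths of all closed walks of a directed graph; it is `0` if the only closed
walks are the trivial ones. -/
noncomputable def period (E : ι → ι → Prop) : ℕ :=
  Nat.setGcd {n | ∃ v, HasWalk E n v v}

theorem dvd_period_iff {c : ℕ} : c ∣ period E ↔ ∀ n v, HasWalk E n v v → c ∣ n := by
  simp only [period, Nat.dvd_setGcd_iff, Set.mem_ofPred_eq, forall_exists_index]

theorem period_dvd (h : HasWalk E n v v) : period E ∣ n :=
  dvd_period_iff.1 dvd_rfl n v h

theorem dvd_period_iff_isChain {c : ℕ} :
    c ∣ period E ↔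
      ∀ (l : List ι) (h : l ≠ []), List.IsChain E (l.getLast h :: l) → c ∣ l.length := by
  rw [dvd_period_iff]
  constructor
  · intro hc l hl hchain
    exact hc _ _ (hasWalk_iff_exists_isChain.2 ⟨l, rfl, hchain, List.getLast_cons hl⟩)
  · intro hc n v h
    obtain ⟨l, rfl, hchain, hlast⟩ := hasWalk_iff_exists_isChain.1 h
    rcases eq_or_ne l [] with rfl | hl
    · exact dvd_zero c
    · rw [List.getLast_cons hl] at hlast
      exact hc l hl (by rwa [hlast])

theorem eq_period_of_isChain {d : ℕ}
    (hd : (∀ (l : List ι) (h : l ≠ []), List.IsChain E (l.getLast h :: l) → d ∣ l.length) ∧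
      ∀ c : ℕ, (∀ (l : List ι) (h : l ≠ []),
        List.IsChain E (l.getLast h :: l) → c ∣ l.length) → c ∣ d) :
    d = period E :=
  Nat.dvd_antisymm (dvd_period_iff_isChain.2 hd.1)
    (hd.2 _ (dvd_period_iff_isChain.1 dvd_rfl))

end Walks

section StronglyConnected

variable {ι : Type*} {E : ι → ι → Prop} {c m n : ℕ} {u v : ι}

/-- A nonempty directed graph in which every two vertices are joined by a walk of positive length.
This excludes the graph with one vertex and no edge. -/
structure IsStronglyConnected (E : ι → ι → Prop) : Prop where
  nonempty : Nonempty ι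
  transGen : ∀ u v, TransGen E u v

namespace IsStronglyConnected

theorem exists_edge (hE : IsStronglyConnected E) (u : ι) : ∃ v, E u v :=
  let ⟨v, huv, _⟩ := TransGen.head'_iff.1 (hE.transGen u u)
  ⟨v, huv⟩

theorem exists_hasWalk (hE : IsStronglyConnected E) (u v : ι) : ∃ n, HasWalk E n u v :=
  reflTransGen_iff_exists_hasWalk.1 (hE.transGen u v).to_reflTransGen

theorem exists_hasWalk_of_length (hE : IsStronglyConnected E) (n : ℕ) (u : ι) :
    ∃ v, HasWalk E n u v := by
  induction n generalizing u with
  | zero => exact ⟨u, rfl⟩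
  | succ n ih =>
    obtain ⟨w, huw⟩ := hE.exists_edge u
    obtain ⟨v, hwv⟩ := ih w
    exact ⟨v, w, huw, hwv⟩

theorem period_ne_zero (hE : IsStronglyConnected E) : period E ≠ 0 := by
  obtain ⟨r⟩ := hE.nonempty
  obtain ⟨s, hrs⟩ := hE.exists_edge r
  obtain ⟨n, hsr⟩ := hE.exists_hasWalk s r
  exact ne_zero_of_dvd_ne_zero n.succ_ne_zero (period_dvd ⟨s, hrs, hsr⟩)

end IsStronglyConnected

/-- The submonoid of lengths of closed walks based at a vertex. -/
def loopLengths (E : ι → ι → Prop) (v : ι) : AddSubmonoid ℕ where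
  carrier := {n | HasWalk E n v v}
  zero_mem' := rfl
  add_mem' := HasWalk.append

theorem IsStronglyConnected.setGcd_loopLengths_dvd_period (hE : IsStronglyConnected E) (v : ι) :
    Nat.setGcd (loopLengths E v : Set ℕ) ∣ period E := by
  refine dvd_period_iff.2 fun n w hw ↦ ?_
  obtain ⟨a, hvw⟩ := hE.exists_hasWalk v w
  obtain ⟨b, hwv⟩ := hE.exists_hasWalk w v
  have without_loop : Nat.setGcd (loopLengths E v : Set ℕ) ∣ a + b :=
    Nat.setGcd_dvd_of_mem (hvw.append hwv)
  have with_loop : Nat.setGcd (loopLengths E v : Set ℕ) ∣ a + n + b :=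
    Nat.setGcd_dvd_of_mem ((hvw.append hw).append hwv)
  rw [add_right_comm] at with_loop
  exact (Nat.dvd_add_right without_loop).1 with_loop

theorem IsStronglyConnected.eventually_hasWalk (hE : IsStronglyConnected E)
    (h : HasWalk E m u v) : ∀ᶠ n in atTop, n ≡ m [MOD period E] → HasWalk E n u v := by
  obtain ⟨N, hN⟩ := Nat.exists_mem_closure_of_ge (loopLengths E v : Set ℕ)
  rw [AddSubmonoid.closure_eq] at hN
  filter_upwards [eventually_ge_atTop (m + N)] with n hn hmod
  have hdvd : period E ∣ n - m := (Nat.modEq_iff_dvd' (by omega)).1 hmod.symm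
  have hloop : HasWalk E (n - m) v v :=
    hN (n - m) (by omega) ((hE.setGcd_loopLengths_dvd_period v).trans hdvd)
  simpa only [Nat.add_sub_of_le (show m ≤ n by omega)] using h.append hloop

/-- A cyclic labelling of the vertices of a directed graph that increases by one along each
edge. -/
def IsPhase (E : ι → ι → Prop) (φ : ι → ZMod c) : Prop :=
  ∀ ⦃u v⦄, E u v → φ v = φ u + 1

theorem IsPhase.eq_add_of_hasWalk {φ : ι → ZMod c} (hφ : IsPhase E φ) (h : HasWalk E n u v) :
    φ v = φ u + n := by
  induction n generalizing u with
  | zero => cases h; simp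
  | succ n ih =>
    obtain ⟨w, huw, hwv⟩ := h
    rw [ih hwv, hφ huw]
    push_cast
    ring

theorem IsPhase.surjective [NeZero c] {φ : ι → ZMod c} (hφ : IsPhase E φ)
    (hE : IsStronglyConnected E) : Function.Surjective φ := by
  intro a
  obtain ⟨r⟩ := hE.nonempty
  obtain ⟨v, hv⟩ := hE.exists_hasWalk_of_length (a - φ r).val r
  exact ⟨v, by rw [hφ.eq_add_of_hasWalk hv, ZMod.natCast_zmod_val, add_sub_cancel]⟩

theorem IsStronglyConnected.exists_isPhase (hE : IsStronglyConnected E) (hc : c ∣ period E) :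
    ∃ φ : ι → ZMod c, IsPhase E φ := by
  obtain ⟨r⟩ := hE.nonempty
  choose p hp using hE.exists_hasWalk r
  refine ⟨fun v ↦ p v, fun u v huv ↦ ?_⟩
  obtain ⟨b, hvr⟩ := hE.exists_hasWalk v r
  have cast_eq_zero {k : ℕ} (hk : HasWalk E k r r) : (k : ZMod c) = 0 :=
    (ZMod.natCast_eq_zero_iff k c).2 (hc.trans (period_dvd hk))
  have direct := cast_eq_zero ((hp v).append hvr)
  have through_u := cast_eq_zero (((hp u).append (hasWalk_one huv)).append hvr)
  push_cast at direct through_u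
  linear_combination direct - through_u

end StronglyConnected

section ProdGraph

variable {ι₁ ι₂ : Type*} {E₁ : ι₁ → ι₁ → Prop} {E₂ : ι₂ → ι₂ → Prop}

/-- The direct (tensor) product of two directed graphs. -/
def prodGraph (E₁ : ι₁ → ι₁ → Prop) (E₂ : ι₂ → ι₂ → Prop) (x y : ι₁ × ι₂) : Prop :=
  E₁ x.1 y.1 ∧ E₂ x.2 y.2

theorem HasWalk.prod {n : ℕ} {x y : ι₁ × ι₂} (h₁ : HasWalk E₁ n x.1 y.1)
    (h₂ : HasWalk E₂ n x.2 y.2) : HasWalk (prodGraph E₁ E₂) n x y := by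
  induction n generalizing x with
  | zero => exact Prod.ext h₁ h₂
  | succ n ih =>
    obtain ⟨w₁, hxw₁, hwy₁⟩ := h₁
    obtain ⟨w₂, hxw₂, hwy₂⟩ := h₂
    exact ⟨(w₁, w₂), ⟨hxw₁, hxw₂⟩, ih hwy₁ hwy₂⟩

theorem frequently_modEq_and_modEq {d₁ d₂ a₁ a₂ : ℕ} (h₁ : d₁ ≠ 0) (h₂ : d₂ ≠ 0)
    (h : a₁ ≡ a₂ [MOD Nat.gcd d₁ d₂]) :
    ∃ᶠ n in atTop, n ≡ a₁ [MOD d₁] ∧ n ≡ a₂ [MOD d₂] := by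
  obtain ⟨k, hk₁, hk₂⟩ := Nat.chineseRemainder' h
  refine (Nat.frequently_modEq (Nat.lcm_ne_zero h₁ h₂) k).mono fun n hn ↦ ?_
  exact ⟨(hn.of_dvd (Nat.dvd_lcm_left d₁ d₂)).trans hk₁,
    (hn.of_dvd (Nat.dvd_lcm_right d₁ d₂)).trans hk₂⟩

theorem IsStronglyConnected.reflTransGen_prodGraph (hE₁ : IsStronglyConnected E₁)
    (hE₂ : IsStronglyConnected E₂) {x y : ι₁ × ι₂} {m₁ m₂ : ℕ} (h₁ : HasWalk E₁ m₁ x.1 y.1)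
    (h₂ : HasWalk E₂ m₂ x.2 y.2) (hm : m₁ ≡ m₂ [MOD Nat.gcd (period E₁) (period E₂)]) :
    ReflTransGen (prodGraph E₁ E₂) x y := by
  obtain ⟨n, ⟨hn₁, hn₂⟩, hw₁, hw₂⟩ :=
    ((frequently_modEq_and_modEq hE₁.period_ne_zero hE₂.period_ne_zero hm).and_eventually
      ((hE₁.eventually_hasWalk h₁).and (hE₂.eventually_hasWalk h₂))).exists
  exact reflTransGen_iff_exists_hasWalk.2 ⟨n, (hw₁ hn₁).prod (hw₂ hn₂)⟩

theorem IsPhase.sub_eq_sub_of_reflTransGen {c : ℕ} {φ₁ : ι₁ → ZMod c} {φ₂ : ι₂ → ZMod c}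
    (hφ₁ : IsPhase E₁ φ₁) (hφ₂ : IsPhase E₂ φ₂) {x y : ι₁ × ι₂}
    (h : ReflTransGen (prodGraph E₁ E₂) x y) : φ₁ x.1 - φ₂ x.2 = φ₁ y.1 - φ₂ y.2 := by
  induction h with
  | refl => rfl
  | tail _ hyz ih => rw [ih, hφ₁ hyz.1, hφ₂ hyz.2, add_sub_add_right_eq_sub]

theorem IsStronglyConnected.phase_sub_eq_sub_iff (hE₁ : IsStronglyConnected E₁)
    (hE₂ : IsStronglyConnected E₂) {φ₁ : ι₁ → ZMod (Nat.gcd (period E₁) (period E₂))}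
    {φ₂ : ι₂ → ZMod (Nat.gcd (period E₁) (period E₂))} (hφ₁ : IsPhase E₁ φ₁)
    (hφ₂ : IsPhase E₂ φ₂) {x y : ι₁ × ι₂} :
    φ₁ x.1 - φ₂ x.2 = φ₁ y.1 - φ₂ y.2 ↔ ReflTransGen (prodGraph E₁ E₂) x y := by
  refine ⟨fun h ↦ ?_, hφ₁.sub_eq_sub_of_reflTransGen hφ₂⟩
  obtain ⟨m₁, hw₁⟩ := hE₁.exists_hasWalk x.1 y.1
  obtain ⟨m₂, hw₂⟩ := hE₂.exists_hasWalk x.2 y.2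
  refine hE₁.reflTransGen_prodGraph hE₂ hw₁ hw₂ ((ZMod.natCast_eq_natCast_iff _ _ _).1 ?_)
  linear_combination hφ₂.eq_add_of_hasWalk hw₂ - hφ₁.eq_add_of_hasWalk hw₁ - h

theorem IsStronglyConnected.exists_surjective_fin_eq_iff_reflTransGen_prodGraph
    (hE₁ : IsStronglyConnected E₁) (hE₂ : IsStronglyConnected E₂) :
    ∃ f : ι₁ × ι₂ → Fin (Nat.gcd (period E₁) (period E₂)), Function.Surjective f ∧
      ∀ x y, f x = f y ↔ ReflTransGen (prodGraph E₁ E₂) x y := by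
  obtain ⟨φ₁, hφ₁⟩ := hE₁.exists_isPhase (Nat.gcd_dvd_left (period E₁) (period E₂))
  obtain ⟨φ₂, hφ₂⟩ := hE₂.exists_isPhase (Nat.gcd_dvd_right (period E₁) (period E₂))
  have : NeZero (Nat.gcd (period E₁) (period E₂)) := ⟨Nat.gcd_ne_zero_left hE₁.period_ne_zero⟩
  let e := (ZMod.finEquiv (Nat.gcd (period E₁) (period E₂))).symm
  refine ⟨fun x ↦ e (φ₁ x.1 - φ₂ x.2), e.surjective.comp fun a ↦ ?_, fun x y ↦ ?_⟩
  · obtain ⟨r⟩ := hE₂.nonempty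
    obtain ⟨u, hu⟩ := hφ₁.surjective hE₁ (a + φ₂ r)
    exact ⟨(u, r), by simp only [hu, add_sub_cancel_right]⟩
  · rw [e.injective.eq_iff, hE₁.phase_sub_eq_sub_iff hE₂ hφ₁ hφ₂]

end ProdGraph

section Span

variable {R M κ γ : Type*} [Semiring R] [AddCommMonoid M] [Module R M] {v : κ → M}

theorem iSupIndep_span_image_fiber (hv : LinearIndependent R v) (f : κ → γ) :
    iSupIndep fun c ↦ span R (v '' (f ⁻¹' {c})) := by
  intro c
  have hle : ⨆ (a) (_ : a ≠ c), span R (v '' (f ⁻¹' {a})) ≤ span R (v '' (f ⁻¹' {c})ᶜ) :=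
    iSup₂_le fun a ha ↦ span_mono <| Set.image_mono fun k (hk : f k = a) ↦ by
      simpa only [Set.mem_compl_iff, Set.mem_preimage, Set.mem_singleton_iff, hk] using ha
  exact (hv.disjoint_span_image disjoint_compl_right).mono_right hle

theorem iSup_span_image_fiber (hv : span R (Set.range v) = ⊤) (f : κ → γ) :
    ⨆ c, span R (v '' (f ⁻¹' {c})) = ⊤ := by
  rw [← span_iUnion, ← Set.image_iUnion, ← Set.preimage_iUnion, Set.iUnion_of_singleton,
    Set.preimage_univ, Set.image_univ, hv]

theorem mem_span_image_iff_repr {b : Module.Basis κ R M} {S : Set κ} {x : M} :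
    x ∈ span R (b '' S) ↔ ∀ k, b.repr x k ≠ 0 → k ∈ S := by
  simp only [b.mem_span_image, Set.subset_def, Finset.mem_coe, Finsupp.mem_support_iff]

theorem basis_mem_span_image_iff [Nontrivial R] {b : Module.Basis κ R M} {S : Set κ} {k : κ} :
    b k ∈ span R (b '' S) ↔ k ∈ S := by
  classical
  simp [mem_span_image_iff_repr, Finsupp.single_apply]

end Span

section Algebra

variable {K A κ : Type*} [Field K] [NonUnitalNonAssocRing A] [Module K A]
  {b : Module.Basis κ K A}

/-- A two-sided ideal of a nonassociative algebra, given as a subspace. -/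
def IsIdeal (I : Submodule K A) : Prop :=
  ∀ x ∈ I, ∀ a : A, a * x ∈ I ∧ x * a ∈ I

/-- The subspace `I` is simple as an algebra in its own right. It is meant for subspaces closed
under multiplication; ideals of `I` are represented by the subspaces `J ≤ I` of `A`. -/
def IsSimple (I : Submodule K A) : Prop :=
  (∃ x ∈ I, ∃ y ∈ I, x * y ≠ 0) ∧
    ∀ J : Submodule K A, J ≤ I → (∀ x ∈ J, ∀ a ∈ I, a * x ∈ J ∧ x * a ∈ J) → J = ⊥ ∨ J = I

theorem isSimple_top_iff :
    IsSimple (⊤ : Submodule K A) ↔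
      (∃ x y : A, x * y ≠ 0) ∧ ∀ I : Submodule K A, IsIdeal I → I = ⊥ ∨ I = ⊤ := by
  simp only [IsSimple, IsIdeal, Submodule.mem_top, true_and, le_top, forall_const]

/-- A basis of an evolution algebra exhibiting it as such: distinct basis vectors multiply to
zero. -/
def IsNatural (b : Module.Basis κ K A) : Prop :=
  ∀ i j, i ≠ j → b i * b j = 0

/-- The directed graph of an evolution algebra relative to a natural basis. -/
def graph (b : Module.Basis κ K A) (i j : κ) : Prop :=
  b.repr (b i * b i) j ≠ 0

/-- A set of vertices of the graph of `b` that no edge leaves. -/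
def IsHereditary (b : Module.Basis κ K A) (S : Set κ) : Prop :=
  ∀ ⦃i j⦄, graph b i j → i ∈ S → j ∈ S

theorem IsHereditary.sq_mem {S : Set κ} (hS : IsHereditary b S) {k : κ} (hk : k ∈ S) :
    b k * b k ∈ span K (b '' S) :=
  mem_span_image_iff_repr.2 fun _ hj ↦ hS hj hk

theorem IsHereditary.span_sq_le {S : Set κ} (hS : IsHereditary b S) :
    span K ((fun k ↦ b k * b k) '' S) ≤ span K (b '' S) :=
  span_le.2 (Set.forall_mem_image.2 fun _ hk ↦ hS.sq_mem hk)

theorem IsHereditary.span_image_le_span_sq {S : Set κ} (hS : IsHereditary b S)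
    (hSc : IsHereditary b Sᶜ) (hsq : span K (Set.range fun k ↦ b k * b k) = ⊤) :
    span K (b '' S) ≤ span K ((fun k ↦ b k * b k) '' S) := by
  have hdisj : Disjoint (span K (b '' S)) (span K (b '' Sᶜ)) :=
    b.linearIndependent.disjoint_span_image disjoint_compl_right
  have hsup : span K ((fun k ↦ b k * b k) '' S) ⊔ span K (b '' Sᶜ) = ⊤ := by
    rw [eq_top_iff, ← hsq, ← Set.image_univ, ← Set.union_compl_self S, Set.image_union, span_union]
    exact sup_le_sup_left hSc.span_sq_le _
  refine (eq_of_le_of_inf_le_of_sup_le (z := span K (b '' Sᶜ)) hS.span_sq_le ?_ ?_).ge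
  · rw [hdisj.eq_bot]
    exact bot_le
  · rw [hsup]
    exact le_top

section NaturalBasis

variable [SMulCommClass K A A]

theorem IsNatural.basis_mul (hb : IsNatural b) (k : κ) (x : A) :
    b k * x = b.repr x k • (b k * b k) := by
  have h : LinearMap.mulLeft K (b k) = (b.coord k).smulRight (b k * b k) := by
    refine b.ext fun j ↦ ?_
    rcases eq_or_ne k j with rfl | hkj
    · simp
    · simp [hb k j hkj, hkj.symm]
  exact LinearMap.congr_fun h x

theorem IsNatural.eq_span_image_of_ideal (hb : IsNatural b) {S : Set κ}
    (hconn : ∀ i ∈ S, ∀ j ∈ S, ReflTransGen (graph b) i j)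
    (hsq : span K (b '' S) ≤ span K ((fun k ↦ b k * b k) '' S)) {J : Submodule K A}
    (hJS : J ≤ span K (b '' S)) (hJ : ∀ x ∈ J, ∀ a ∈ span K (b '' S), a * x ∈ J)
    (hJ_ne : J ≠ ⊥) : J = span K (b '' S) := by
  have mem_of_repr_ne {x : A} (hx : x ∈ J) {k : κ} (hk : b.repr x k ≠ 0) : k ∈ S :=
    mem_span_image_iff_repr.1 (hJS hx) k hk
  have sq_mem_of_repr_ne {x : A} (hx : x ∈ J) {k : κ} (hk : b.repr x k ≠ 0) : b k * b k ∈ J := by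
    have hmul := hJ x hx (b k) (basis_mem_span_image_iff.2 (mem_of_repr_ne hx hk))
    rwa [hb.basis_mul, J.smul_mem_iff hk] at hmul
  have sq_mem_of_reflTransGen {i j : κ} (h : ReflTransGen (graph b) i j)
      (hi : b i * b i ∈ J) : b j * b j ∈ J := by
    induction h with
    | refl => exact hi
    | tail _ hjk ih => exact sq_mem_of_repr_ne ih hjk
  obtain ⟨x, hx, hx_ne⟩ := J.exists_mem_ne_zero_of_ne_bot hJ_ne
  obtain ⟨k, hk⟩ : ∃ k, b.repr x k ≠ 0 :=
    Finsupp.ne_iff.1 (b.repr.map_ne_zero_iff.2 hx_ne)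
  refine hJS.antisymm (hsq.trans (span_le.2 (Set.forall_mem_image.2 fun j hj ↦ ?_)))
  exact sq_mem_of_reflTransGen (hconn k (mem_of_repr_ne hx hk) j hj) (sq_mem_of_repr_ne hx hk)

theorem IsNatural.isSimple_span_image (hb : IsNatural b) {S : Set κ} (hne : S.Nonempty)
    (hconn : ∀ i ∈ S, ∀ j ∈ S, ReflTransGen (graph b) i j)
    (hsq : span K (b '' S) ≤ span K ((fun k ↦ b k * b k) '' S)) :
    IsSimple (span K (b '' S)) := by
  refine ⟨?_, fun J hJS hJ ↦ or_iff_not_imp_left.2 <|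
    hb.eq_span_image_of_ideal hconn hsq hJS fun x hx a ha ↦ (hJ x hx a ha).1⟩
  by_contra! hzero
  obtain ⟨k, hk⟩ := hne
  have hsq_le : span K ((fun k ↦ b k * b k) '' S) ≤ ⊥ :=
    span_le.2 <| Set.forall_mem_image.2 fun j hj ↦ (mem_bot K).2 <|
      hzero _ (basis_mem_span_image_iff.2 hj) _ (basis_mem_span_image_iff.2 hj)
  exact b.ne_zero k ((mem_bot K).1 (hsq_le (hsq (basis_mem_span_image_iff.2 hk))))

variable [IsScalarTower K A A]

theorem IsNatural.mul_comm (hb : IsNatural b) (x y : A) : x * y = y * x := by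
  have h : LinearMap.mul K A = (LinearMap.mul K A).flip := by
    refine b.ext fun i ↦ b.ext fun j ↦ ?_
    rcases eq_or_ne i j with rfl | hij
    · rfl
    · simp only [LinearMap.flip_apply, LinearMap.mul_apply', hb i j hij, hb j i hij.symm]
  exact LinearMap.congr_fun₂ h x y

theorem IsNatural.mul_mem_of_sq_mem (hb : IsNatural b) {J : Submodule K A} {x : A}
    (h : ∀ k, b.repr x k ≠ 0 → b k * b k ∈ J) (a : A) : a * x ∈ J := by
  suffices ⊤ ≤ J.comap (LinearMap.mulRight K x) from this (Submodule.mem_top (x := a))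
  rw [← b.span_eq, span_le, Set.range_subset_iff]
  intro k
  change b k * x ∈ J
  rw [hb.basis_mul]
  rcases eq_or_ne (b.repr x k) 0 with hk | hk
  · simp only [hk, zero_smul, zero_mem]
  · exact J.smul_mem _ (h k hk)

theorem IsNatural.isIdeal_of_sq_mem (hb : IsNatural b) {J : Submodule K A}
    (h : ∀ x ∈ J, ∀ k, b.repr x k ≠ 0 → b k * b k ∈ J) : IsIdeal J := by
  intro x hx a
  rw [hb.mul_comm x a, and_self]
  exact hb.mul_mem_of_sq_mem (h x hx) a

theorem IsNatural.isIdeal_span_image (hb : IsNatural b) {S : Set κ} (hS : IsHereditary b S) :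
    IsIdeal (span K (b '' S)) :=
  hb.isIdeal_of_sq_mem fun _ hx k hk ↦ hS.sq_mem (mem_span_image_iff_repr.1 hx k hk)

theorem IsNatural.span_sq_eq_top (hb : IsNatural b) (hA : IsSimple (⊤ : Submodule K A)) :
    span K (Set.range fun k ↦ b k * b k) = ⊤ := by
  obtain ⟨⟨x, y, hxy⟩, hideal⟩ := isSimple_top_iff.1 hA
  have sq_mem (k : κ) : b k * b k ∈ span K (Set.range fun k ↦ b k * b k) :=
    subset_span ⟨k, rfl⟩
  refine (hideal _ (hb.isIdeal_of_sq_mem fun _ _ k _ ↦ sq_mem k)).resolve_left fun hbot ↦ hxy ?_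
  rw [← mem_bot K, ← hbot]
  exact hb.mul_mem_of_sq_mem (fun k _ ↦ sq_mem k) x

theorem IsNatural.exists_graph (hb : IsNatural b) {x y : A} (hxy : x * y ≠ 0) :
    ∃ i j, graph b i j := by
  contrapose! hxy
  have sq_eq_zero (k : κ) : b k * b k = 0 :=
    b.ext_elem fun j ↦ by simpa only [map_zero, Finsupp.zero_apply] using not_not.1 (hxy k j)
  exact (mem_bot K).1 (hb.mul_mem_of_sq_mem (fun k _ ↦ (mem_bot K).2 (sq_eq_zero k)) x)

theorem IsNatural.reflTransGen_graph (hb : IsNatural b) (hA : IsSimple (⊤ : Submodule K A))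
    (u v : κ) : ReflTransGen (graph b) u v := by
  have hered : IsHereditary b {w | ReflTransGen (graph b) u w} := fun _ _ hij hui ↦ hui.tail hij
  have hne : span K (b '' {w | ReflTransGen (graph b) u w}) ≠ ⊥ :=
    (Submodule.ne_bot_iff _).2 ⟨b u, basis_mem_span_image_iff.2 .refl, b.ne_zero u⟩
  have htop := ((isSimple_top_iff.1 hA).2 _ (hb.isIdeal_span_image hered)).resolve_left hne
  exact basis_mem_span_image_iff.1 (htop ▸ Submodule.mem_top)

theorem IsNatural.isStronglyConnected_graph (hb : IsNatural b)
    (hA : IsSimple (⊤ : Submodule K A)) : IsStronglyConnected (graph b) := by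
  obtain ⟨⟨x, y, hxy⟩, _⟩ := isSimple_top_iff.1 hA
  obtain ⟨i, j, hij⟩ := hb.exists_graph hxy
  refine ⟨⟨i⟩, fun u v ↦ ?_⟩
  exact TransGen.trans_right (hb.reflTransGen_graph hA u i)
    (TransGen.head' hij (hb.reflTransGen_graph hA j v))

theorem IsNatural.isIdeal_and_isSimple_span_fiber (hb : IsNatural b)
    (hsq : span K (Set.range fun k ↦ b k * b k) = ⊤) {γ : Type*} {f : κ → γ}
    (hf : Function.Surjective f) (hconn : ∀ i j, f i = f j ↔ ReflTransGen (graph b) i j) (c : γ) :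
    IsIdeal (span K (b '' (f ⁻¹' {c}))) ∧ IsSimple (span K (b '' (f ⁻¹' {c}))) := by
  have map_eq {i j : κ} (hij : graph b i j) : f i = f j := (hconn i j).2 (.single hij)
  have hered : IsHereditary b (f ⁻¹' {c}) := fun i j hij hi ↦ (map_eq hij).symm.trans hi
  have hered_compl : IsHereditary b (f ⁻¹' {c})ᶜ := fun i j hij hi hj ↦ hi ((map_eq hij).trans hj)
  refine ⟨hb.isIdeal_span_image hered, hb.isSimple_span_image (hf c) (fun i hi j hj ↦ ?_)
    (hered.span_image_le_span_sq hered_compl hsq)⟩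
  exact (hconn i j).1 (Eq.trans hi (Eq.symm hj))

end NaturalBasis

end Algebra

section TensorProduct

variable {K A₁ A₂ ι₁ ι₂ : Type*} [Field K]
  [NonUnitalNonAssocRing A₁] [Module K A₁] [SMulCommClass K A₁ A₁] [IsScalarTower K A₁ A₁]
  [NonUnitalNonAssocRing A₂] [Module K A₂] [SMulCommClass K A₂ A₂] [IsScalarTower K A₂ A₂]
  {b₁ : Module.Basis ι₁ K A₁} {b₂ : Module.Basis ι₂ K A₂}

theorem tensorProduct_mul_tensorProduct (i j : ι₁ × ι₂) :
    b₁.tensorProduct b₂ i * b₁.tensorProduct b₂ j =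
      (b₁ i.1 * b₁ j.1) ⊗ₜ[K] (b₂ i.2 * b₂ j.2) := by
  simp only [Module.Basis.tensorProduct_apply', Algebra.TensorProduct.tmul_mul_tmul]

theorem IsNatural.tensorProduct (hb₁ : IsNatural b₁) (hb₂ : IsNatural b₂) :
    IsNatural (b₁.tensorProduct b₂) := by
  intro i j hij
  rw [tensorProduct_mul_tensorProduct]
  by_cases h₁ : i.1 = j.1
  · rw [hb₂ i.2 j.2 fun h₂ ↦ hij (Prod.ext h₁ h₂), TensorProduct.tmul_zero]
  · rw [hb₁ i.1 j.1 h₁, TensorProduct.zero_tmul]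

theorem graph_tensorProduct :
    graph (b₁.tensorProduct b₂) = prodGraph (graph b₁) (graph b₂) := by
  ext i ⟨j₁, j₂⟩
  simp only [graph, prodGraph, tensorProduct_mul_tensorProduct,
    Module.Basis.tensorProduct_repr_tmul_apply, smul_eq_mul, mul_ne_zero_iff, and_comm]

theorem span_sq_tensorProduct_eq_top (h₁ : span K (Set.range fun i ↦ b₁ i * b₁ i) = ⊤)
    (h₂ : span K (Set.range fun i ↦ b₂ i * b₂ i) = ⊤) :
    span K (Set.range fun k ↦ b₁.tensorProduct b₂ k * b₁.tensorProduct b₂ k) = ⊤ := by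
  rw [eq_top_iff, ← TensorProduct.map₂_mk_top_top_eq_top, ← h₁, ← h₂, map₂_span_span]
  apply span_mono
  rintro _ ⟨_, ⟨i, rfl⟩, _, ⟨j, rfl⟩, rfl⟩
  exact ⟨(i, j), tensorProduct_mul_tensorProduct (i, j) (i, j)⟩

end TensorProduct

end EvolutionAlgebra

open EvolutionAlgebra in
theorem tensor_semisimple_general {K A₁ A₂ ι₁ ι₂ : Type*} [Field K]
    [NonUnitalNonAssocRing A₁] [Module K A₁] [SMulCommClass K A₁ A₁] [IsScalarTower K A₁ A₁]
    [NonUnitalNonAssocRing A₂] [Module K A₂] [SMulCommClass K A₂ A₂] [IsScalarTower K A₂ A₂]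
    {b₁ : Module.Basis ι₁ K A₁} {b₂ : Module.Basis ι₂ K A₂}
    (hb₁ : IsNatural b₁) (hb₂ : IsNatural b₂)
    (hA₁ : IsSimple (⊤ : Submodule K A₁)) (hA₂ : IsSimple (⊤ : Submodule K A₂)) :
    ∃ I : Fin (Nat.gcd (period (graph b₁)) (period (graph b₂))) → Submodule K (A₁ ⊗[K] A₂),
      (∀ i, IsIdeal (I i)) ∧ iSupIndep I ∧ ⨆ i, I i = ⊤ ∧ ∀ i, IsSimple (I i) := by
  obtain ⟨f, hf, hconn⟩ :=
    (hb₁.isStronglyConnected_graph hA₁).exists_surjective_fin_eq_iff_reflTransGen_prodGraph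
      (hb₂.isStronglyConnected_graph hA₂)
  rw [← graph_tensorProduct] at hconn
  have hcomponent := (hb₁.tensorProduct hb₂).isIdeal_and_isSimple_span_fiber
    (span_sq_tensorProduct_eq_top (hb₁.span_sq_eq_top hA₁) (hb₂.span_sq_eq_top hA₂)) hf hconn
  exact ⟨fun c ↦ Submodule.span K (b₁.tensorProduct b₂ '' (f ⁻¹' {c})),
    fun c ↦ (hcomponent c).1,
    iSupIndep_span_image_fiber (b₁.tensorProduct b₂).linearIndependent f,
    iSup_span_image_fiber (b₁.tensorProduct b₂).span_eq f,
    fun c ↦ (hcomponent c).2⟩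

/-- Let `A₁` and `A₂` be finite-dimensional simple evolution algebras over a
field `K`.  Then `A₁ ⊗[K] A₂` is semisimple: it is the (internal) direct sum of finitely many
two-sided ideals, each of which is a simple algebra; moreover the number of summands equals
`gcd d₁ d₂` where `dᵢ` is the gcd of the lengths of the closed paths of the directed graph of
`Aᵢ` relative to a natural basis. -/
theorem tensor_semisimple {K A₁ A₂ : Type*} [Field K]
    [NonUnitalNonAssocCommRing A₁] [Module K A₁]
    [SMulCommClass K A₁ A₁] [IsScalarTower K A₁ A₁]
    [NonUnitalNonAssocCommRing A₂] [Module K A₂]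
    [SMulCommClass K A₂ A₂] [IsScalarTower K A₂ A₂]
    {ι₁ ι₂ : Type*} [Fintype ι₁] [Fintype ι₂]
    (b₁ : Module.Basis ι₁ K A₁) (hn₁ : ∀ i j : ι₁, i ≠ j → b₁ i * b₁ j = 0)
    (b₂ : Module.Basis ι₂ K A₂) (hn₂ : ∀ i j : ι₂, i ≠ j → b₂ i * b₂ j = 0)
    (hs₁ : (∃ x y : A₁, x * y ≠ 0) ∧
      ∀ I : Submodule K A₁, (∀ x ∈ I, ∀ a : A₁, a * x ∈ I ∧ x * a ∈ I) → I = ⊥ ∨ I = ⊤)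
    (hs₂ : (∃ x y : A₂, x * y ≠ 0) ∧
      ∀ I : Submodule K A₂, (∀ x ∈ I, ∀ a : A₂, a * x ∈ I ∧ x * a ∈ I) → I = ⊥ ∨ I = ⊤)
    (edge₁ : ι₁ → ι₁ → Prop) (he₁ : ∀ i j : ι₁, edge₁ i j ↔ b₁.repr (b₁ i * b₁ i) j ≠ 0)
    (edge₂ : ι₂ → ι₂ → Prop) (he₂ : ∀ i j : ι₂, edge₂ i j ↔ b₂.repr (b₂ i * b₂ i) j ≠ 0)
    (d₁ d₂ : ℕ)
    (hd₁ : (∀ (l : List ι₁) (h : l ≠ []),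
        List.Chain edge₁ (l.getLast h) l → d₁ ∣ l.length) ∧
      ∀ c : ℕ, (∀ (l : List ι₁) (h : l ≠ []),
        List.Chain edge₁ (l.getLast h) l → c ∣ l.length) → c ∣ d₁)
    (hd₂ : (∀ (l : List ι₂) (h : l ≠ []),
        List.Chain edge₂ (l.getLast h) l → d₂ ∣ l.length) ∧
      ∀ c : ℕ, (∀ (l : List ι₂) (h : l ≠ []),
        List.Chain edge₂ (l.getLast h) l → c ∣ l.length) → c ∣ d₂) :
    ∃ (n : ℕ) (I : Fin n → Submodule K (A₁ ⊗[K] A₂)),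
      n = Nat.gcd d₁ d₂ ∧
      -- each `I i` is a two-sided ideal
      (∀ i : Fin n, ∀ x ∈ I i, ∀ a : A₁ ⊗[K] A₂, a * x ∈ I i ∧ x * a ∈ I i) ∧
      -- internal direct sum
      iSupIndep I ∧ (⨆ i : Fin n, I i) = ⊤ ∧
      -- each summand is a simple algebra
      (∀ i : Fin n,
        (∃ x ∈ I i, ∃ y ∈ I i, x * y ≠ 0) ∧
        ∀ J : Submodule K (A₁ ⊗[K] A₂), J ≤ I i →
          (∀ x ∈ J, ∀ a ∈ I i, a * x ∈ J ∧ x * a ∈ J) → J = ⊥ ∨ J = I i) := by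
  obtain ⟨rfl, rfl⟩ : edge₁ = EvolutionAlgebra.graph b₁ ∧ edge₂ = EvolutionAlgebra.graph b₂ :=
    ⟨funext₂ fun i j ↦ propext (he₁ i j), funext₂ fun i j ↦ propext (he₂ i j)⟩
  obtain ⟨I, hI⟩ := tensor_semisimple_general hn₁ hn₂
    (EvolutionAlgebra.isSimple_top_iff.2 hs₁) (EvolutionAlgebra.isSimple_top_iff.2 hs₂)
  exact ⟨_, I, by rw [EvolutionAlgebra.eq_period_of_isChain hd₁,
    EvolutionAlgebra.eq_period_of_isChain hd₂], hI⟩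
end

section
/- Let A be a finite-dimensional evolution algebra over a field K with natural basis B = {e_h}_{h=1}^n, and let I be a two-sided ideal of A of the form I = K·u for some u ∈ A whose support relative to B (the set of indices h such that the e_h-coordinate of u is nonzero) has more than one element. Then the quotient algebra A/I is not simple. -/
/-!
Let `I` be an ideal of an evolution algebra `A` with natural basis `b`, and let `u ∈ I` have nonzero
`i`-th coordinate `c`. Then `b i * u = c • (b i * b i)`, so `b i * b i ∈ I`. Since `b i` kills every
other basis vector, the class of `b i` annihilates `A/I`. In a simple algebra the annihilator is an
ideal other than the whole algebra, hence zero, so simplicity of `A/I` forces `b i ∈ I`. This is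
impossible when `I` is a line spanned by a vector with at least two nonzero coordinates.
-/

theorem basis_notMem_span_singleton {R M ι : Type*} [Semiring R] [IsDomain R] [AddCommMonoid M]
    [Module R M] (b : Module.Basis ι R M) {u : M} (hu : 1 < (b.repr u).support.card) (i : ι) :
    b i ∉ Submodule.span R {u} := by
  intro hi
  obtain ⟨c, hc⟩ := Submodule.mem_span_singleton.mp hi
  have hc0 : c ≠ 0 := by
    rintro rfl
    exact b.ne_zero i (by rw [← hc, zero_smul])
  have support_eq : (b.repr u).support = {i} := by
    rw [← Finsupp.support_smul_eq hc0, ← map_smul, hc, b.repr_self,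
      Finsupp.support_single i one_ne_zero]
  simp [support_eq] at hu

section Semiring

variable {R A ι : Type*} [Semiring R] [NonUnitalNonAssocSemiring A] [Module R A]

/-- A basis whose distinct members multiply to zero. An algebra with such a basis is an evolution
algebra. -/
def IsNaturalBasis (b : Module.Basis ι R A) : Prop :=
  ∀ i j : ι, i ≠ j → b i * b j = 0

/-- A two-sided ideal of an algebra that need be neither associative nor unital, as a predicate on
subspaces. -/
def IsIdeal (I : Submodule R A) : Prop :=
  ∀ x ∈ I, ∀ a : A, a * x ∈ I ∧ x * a ∈ I

/-- Simplicity of the quotient algebra `A/I`, expressed in `A` through the correspondence between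
ideals of `A/I` and ideals of `A` containing `I`; the first condition says `(A/I)² ≠ 0`. -/
def IsSimpleQuotient (I : Submodule R A) : Prop :=
  (∃ x y : A, x * y ∉ I) ∧
    ∀ J : Submodule R A, I ≤ J → IsIdeal J → J = I ∨ J = ⊤

theorem IsNaturalBasis.basis_mul [SMulCommClass R A A] {b : Module.Basis ι R A}
    (hb : IsNaturalBasis b) (i : ι) (a : A) : b i * a = b.repr a i • (b i * b i) := by
  have maps_eq : LinearMap.mulLeft R (b i) = (b.coord i).smulRight (b i * b i) := by
    refine b.ext fun j => ?_
    obtain rfl | hij := eq_or_ne i j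
    · simp
    · simp [hb i j hij, Finsupp.single_eq_of_ne hij]
  exact LinearMap.congr_fun maps_eq a

theorem IsNaturalBasis.mul_basis [IsScalarTower R A A] {b : Module.Basis ι R A}
    (hb : IsNaturalBasis b) (i : ι) (a : A) : a * b i = b.repr a i • (b i * b i) := by
  have maps_eq : LinearMap.mulRight R (b i) = (b.coord i).smulRight (b i * b i) := by
    refine b.ext fun j => ?_
    obtain rfl | hij := eq_or_ne i j
    · simp
    · simp [hb j i hij.symm, Finsupp.single_eq_of_ne hij]
  exact LinearMap.congr_fun maps_eq a

variable [SMulCommClass R A A] [IsScalarTower R A A]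

/-- The preimage in `A` of the two-sided annihilator of the quotient algebra `A/I`. -/
def quotientAnnihilator (I : Submodule R A) : Submodule R A where
  carrier := {x | ∀ a : A, a * x ∈ I ∧ x * a ∈ I}
  zero_mem' a := by simp
  add_mem' hx hy a := by
    rw [mul_add, add_mul]
    exact ⟨add_mem (hx a).1 (hy a).1, add_mem (hx a).2 (hy a).2⟩
  smul_mem' c x hx a := by
    rw [mul_smul_comm, smul_mul_assoc]
    exact ⟨I.smul_mem c (hx a).1, I.smul_mem c (hx a).2⟩

theorem mem_quotientAnnihilator {I : Submodule R A} {x : A} :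
    x ∈ quotientAnnihilator I ↔ ∀ a : A, a * x ∈ I ∧ x * a ∈ I :=
  Iff.rfl

theorem IsIdeal.le_quotientAnnihilator {I : Submodule R A} (hI : IsIdeal I) :
    I ≤ quotientAnnihilator I :=
  hI

theorem IsIdeal.isIdeal_quotientAnnihilator {I : Submodule R A} (hI : IsIdeal I) :
    IsIdeal (quotientAnnihilator I) := fun _ hx a =>
  ⟨hI.le_quotientAnnihilator (hx a).1, hI.le_quotientAnnihilator (hx a).2⟩

theorem IsSimpleQuotient.quotientAnnihilator_eq {I : Submodule R A} (hsimple : IsSimpleQuotient I)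
    (hI : IsIdeal I) : quotientAnnihilator I = I := by
  obtain ⟨⟨x, y, hxy⟩, eq_or_eq_top⟩ := hsimple
  refine (eq_or_eq_top _ hI.le_quotientAnnihilator hI.isIdeal_quotientAnnihilator).resolve_right ?_
  intro htop
  have hx : x ∈ quotientAnnihilator I := htop ▸ Submodule.mem_top
  exact hxy (mem_quotientAnnihilator.mp hx y).2

theorem IsNaturalBasis.basis_mem_quotientAnnihilator_iff {b : Module.Basis ι R A}
    (hb : IsNaturalBasis b) {I : Submodule R A} {i : ι} :
    b i ∈ quotientAnnihilator I ↔ b i * b i ∈ I := by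
  refine ⟨fun hi => (mem_quotientAnnihilator.mp hi (b i)).1, fun hsq a => ?_⟩
  rw [hb.mul_basis i a, hb.basis_mul i a]
  exact ⟨I.smul_mem _ hsq, I.smul_mem _ hsq⟩

end Semiring

section Field

variable {K A ι : Type*} [Field K] [NonUnitalNonAssocSemiring A] [Module K A]
  [SMulCommClass K A A] {b : Module.Basis ι K A}

theorem IsNaturalBasis.basis_mul_self_mem (hb : IsNaturalBasis b) {I : Submodule K A}
    (hI : IsIdeal I) {u : A} (hu : u ∈ I) {i : ι} (hi : b.repr u i ≠ 0) : b i * b i ∈ I := by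
  have hmem : b i * u ∈ I := (hI u hu (b i)).1
  rw [hb.basis_mul] at hmem
  exact (I.smul_mem_iff hi).mp hmem

variable [IsScalarTower K A A]

theorem IsSimpleQuotient.basis_mem {I : Submodule K A} (hsimple : IsSimpleQuotient I)
    (hb : IsNaturalBasis b) (hI : IsIdeal I) {u : A} (hu : u ∈ I) {i : ι}
    (hi : b.repr u i ≠ 0) : b i ∈ I := by
  have hann : b i ∈ quotientAnnihilator I :=
    hb.basis_mem_quotientAnnihilator_iff.mpr (hb.basis_mul_self_mem hI hu hi)
  rwa [hsimple.quotientAnnihilator_eq hI] at hann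

theorem quotient_by_line_not_simple_general (hb : IsNaturalBasis b) {u : A}
    (hI : IsIdeal (Submodule.span K {u})) (hsupp : 1 < (b.repr u).support.card) :
    ¬ IsSimpleQuotient (Submodule.span K {u}) := by
  intro hsimple
  obtain ⟨i, hi⟩ := Finset.card_pos.mp (zero_lt_one.trans hsupp)
  exact basis_notMem_span_singleton b hsupp i
    (hsimple.basis_mem hb hI (Submodule.mem_span_singleton_self u) (Finsupp.mem_support_iff.mp hi))

end Field

/-- Let `A` be a finite-dimensional evolution algebra over a field `K` with
natural basis `b`, and let `I = K·u` be a (two-sided) ideal of `A` where the support of `u`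
relative to `b` has more than one element.  Then the quotient algebra `A/I` is not simple:
via the ideal correspondence, it is not the case that both `(A/I)² ≠ 0` (i.e. some product
`x * y ∉ I`) and every ideal of `A` lying between `I` and `A` equals `I` or `A`. -/
theorem quotient_by_line_not_simple {K A ι : Type*} [Field K]
    [NonUnitalNonAssocCommRing A] [Module K A] [SMulCommClass K A A] [IsScalarTower K A A]
    [Fintype ι]
    (b : Module.Basis ι K A) (hnat : ∀ i j : ι, i ≠ j → b i * b j = 0)
    (u : A)
    (hIdeal : ∀ x ∈ Submodule.span K {u}, ∀ a : A,
      a * x ∈ Submodule.span K {u} ∧ x * a ∈ Submodule.span K {u})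
    (hsupp : 1 < (b.repr u).support.card) :
    ¬ ((∃ x y : A, x * y ∉ Submodule.span K {u}) ∧
        ∀ J : Submodule K A, Submodule.span K {u} ≤ J →
          (∀ x ∈ J, ∀ a : A, a * x ∈ J ∧ x * a ∈ J) →
          J = Submodule.span K {u} ∨ J = ⊤) :=
  quotient_by_line_not_simple_general hnat hIdeal hsupp
end
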